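/- arXiv:2402.05161 — 6 statements merged into one kernel-verified Lean document; each statement's English description precedes it below -/
import Mathlib

section
/- Let T be an incomplete table over a schema R and K ⊆ R a set of attributes. Suppose that the sub-table of T consisting of its K-total tuples satisfies the strongly possible key sp⟨K⟩. Then there exists a set U of tuples of T of minimum cardinality among all sets whose removal makes sp⟨K⟩ hold, such that every tuple of U is non-K-total (i.e., every tuple of U has a ⊥ in some attribute of K) and T∖U satisfies sp⟨K⟩. -/
/-- A tuple over schema `R`: assigns to each attribute either a value (`some v`)
or the missing value `⊥` (`none`). -/
abbrev Tuple (R : Type) := R → Option ℕ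

/-- Tuples `t₁`, `t₂` are weakly similar on `X ⊆ R`. -/
def weaklySimilarOn {R : Type} (X : Set R) (t₁ t₂ : Tuple R) : Prop :=
  ∀ A ∈ X, t₁ A = t₂ A ∨ t₁ A = none ∨ t₂ A = none

/-- Active domain of attribute `A` in table `T` (a table is a finite multiset of
tuples, encoded as a function from a finite index type `ι`). -/
def VD {R ι : Type} (T : ι → Tuple R) (A : R) : Set ℕ :=
  {v | ∃ i, T i A = some v}

/-- `T'` is a strongly possible world of `T`: a total table, tuple-wise weakly
similar to `T`, with all values taken from active domains of `T`. -/
def IsSpWorld {R ι : Type} (T : ι → Tuple R) (T' : ι → R → ℕ) : Prop :=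
  ∀ i A, (T i A = none ∨ T i A = some (T' i A)) ∧ T' i A ∈ VD T A

/-- `K` is a strongly possible key of `T`: some spWorld has pairwise distinct
`K`-projections. -/
def spKey {R ι : Type} (T : ι → Tuple R) (K : Set R) : Prop :=
  ∃ T', IsSpWorld T T' ∧ ∀ i j : ι, (∀ A ∈ K, T' i A = T' j A) → i = j

/-- The strongly possible functional dependency `X →sp Y` holds in `T`. -/
def spFD {R ι : Type} (T : ι → Tuple R) (X Y : Set R) : Prop :=
  ∃ T', IsSpWorld T T' ∧
    ∀ i j : ι, (∀ A ∈ X, T' i A = T' j A) → ∀ A ∈ Y, T' i A = T' j A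

/-- A family `𝒦` of key candidates is satisfied simultaneously in one spWorld. -/
def spKeySystem {R ι : Type} (T : ι → Tuple R) (𝒦 : Set (Set R)) : Prop :=
  ∃ T', IsSpWorld T T' ∧ ∀ K ∈ 𝒦, ∀ i j : ι, (∀ A ∈ K, T' i A = T' j A) → i = j

/-- `t` is `K`-total: no `⊥` in any attribute of `K`. -/
def KTotal {R : Type} (K : Set R) (t : Tuple R) : Prop := ∀ A ∈ K, t A ≠ none

/-- Minimum number of tuples to remove from `T` so that `sp⟨K⟩` holds. -/
noncomputable def g3KeyNum {R ι : Type} (T : ι → Tuple R) (K : Set R) : ℕ :=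
  sInf {k : ℕ | ∃ S : Finset ι, S.card = k ∧
      spKey (fun i : {i : ι // i ∉ S} => T i.1) K}

/-- `g₃(K)`: the minimum ratio `|S|/|T|` over subsets `S` of the tuples of `T`
whose removal makes `sp⟨K⟩` hold. -/
noncomputable def g3Key {R ι : Type} [Fintype ι] (T : ι → Tuple R) (K : Set R) : ℚ :=
  (g3KeyNum T K : ℚ) / (Fintype.card ι : ℚ)

/-- Minimum number of tuples to add to `T` so that `sp⟨K⟩` holds. -/
noncomputable def g5KeyNum {R ι : Type} (T : ι → Tuple R) (K : Set R) : ℕ :=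
  sInf {p : ℕ | ∃ S : Fin p → Tuple R, spKey (Sum.elim T S) K}

/-- `g₅(K)`: the minimum ratio `|S|/|T|` over multisets `S` of added tuples such
that `T ∪ S` satisfies `sp⟨K⟩` (active domains taken in the enlarged table). -/
noncomputable def g5Key {R ι : Type} [Fintype ι] (T : ι → Tuple R) (K : Set R) : ℚ :=
  (g5KeyNum T K : ℚ) / (Fintype.card ι : ℚ)

/-- Minimum number of tuples to remove from `T` so that `X →sp Y` holds. -/
noncomputable def g3FDNum {R ι : Type} (T : ι → Tuple R) (X Y : Set R) : ℕ :=
  sInf {k : ℕ | ∃ S : Finset ι, S.card = k ∧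
      spFD (fun i : {i : ι // i ∉ S} => T i.1) X Y}

/-- `g₃(σ)` for an spFD `σ : X →sp Y`. -/
noncomputable def g3FD {R ι : Type} [Fintype ι] (T : ι → Tuple R) (X Y : Set R) : ℚ :=
  (g3FDNum T X Y : ℚ) / (Fintype.card ι : ℚ)

/-- Minimum number of tuples to add to `T` so that `X →sp Y` holds. -/
noncomputable def g5FDNum {R ι : Type} (T : ι → Tuple R) (X Y : Set R) : ℕ :=
  sInf {p : ℕ | ∃ S : Fin p → Tuple R, spFD (Sum.elim T S) X Y}

/-- `g₅(σ)` for an spFD `σ : X →sp Y`. -/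
noncomputable def g5FD {R ι : Type} [Fintype ι] (T : ι → Tuple R) (X Y : Set R) : ℚ :=
  (g5FDNum T X Y : ℚ) / (Fintype.card ι : ℚ)

/-- Minimum number of tuples to remove from `T` so that `sp⟨𝒦⟩` holds. -/
noncomputable def g3SysNum {R ι : Type} (T : ι → Tuple R) (𝒦 : Set (Set R)) : ℕ :=
  sInf {k : ℕ | ∃ S : Finset ι, S.card = k ∧
      spKeySystem (fun i : {i : ι // i ∉ S} => T i.1) 𝒦}

/-- `g₃(𝒦)` for a system `𝒦` of strongly possible keys. -/
noncomputable def g3Sys {R ι : Type} [Fintype ι] (T : ι → Tuple R) (𝒦 : Set (Set R)) : ℚ :=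
  (g3SysNum T 𝒦 : ℚ) / (Fintype.card ι : ℚ)

/-- Adjacency in the `K`-extension graph: the (`K`-total) tuple `f` over
`∏_{A ∈ K} VD(A)` is weakly similar to `t` on `K`. -/
def adjExt {R : Type} (K : Set R) (t : Tuple R) (f : ↥K → ℕ) : Prop :=
  ∀ A : ↥K, t A.1 = none ∨ t A.1 = some (f A)

/-- The `T'`-side vertex class of the `K`-extension graph of `T`: the `K`-total
tuples over `∏_{A ∈ K} VD(A)` weakly similar on `K` to at least one tuple of `T`. -/
def extSide {R ι : Type} (T : ι → Tuple R) (K : Set R) : Set (↥K → ℕ) :=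
  {f | (∀ A : ↥K, f A ∈ VD T A.1) ∧ ∃ i, adjExt K (T i) f}

/-- A matching of the `K`-extension bipartite graph of `T`. -/
def IsExtMatching {R ι : Type} (T : ι → Tuple R) (K : Set R)
    (M : Finset (ι × (↥K → ℕ))) : Prop :=
  (∀ e ∈ M, e.2 ∈ extSide T K ∧ adjExt K (T e.1) e.2) ∧
  (∀ e ∈ M, ∀ e' ∈ M, e.1 = e'.1 → e = e') ∧
  (∀ e ∈ M, ∀ e' ∈ M, e.2 = e'.2 → e = e')

/-- `ν(G)`: the maximum size of a matching in the `K`-extension graph of `T`. -/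
noncomputable def nuExt {R ι : Type} (T : ι → Tuple R) (K : Set R) : ℕ :=
  sSup {n : ℕ | ∃ M : Finset (ι × (↥K → ℕ)), IsExtMatching T K M ∧ M.card = n}

/-- `ℓ(t)`: the number of `K`-total tuples in `∏_{A ∈ K} VD(A)` weakly similar
to `t` on `K` (the degree of `t` in the `K`-extension graph). -/
noncomputable def ellK {R ι : Type} (T : ι → Tuple R) (K : Set R) (t : Tuple R) : ℕ :=
  Set.ncard {f : ↥K → ℕ | (∀ A : ↥K, f A ∈ VD T A.1) ∧ adjExt K t f}

/-- `T_j*`: the set of `K`-total tuples over `∏_{A ∈ K} VD(A)` weakly similar on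
`K` to some tuple among the first `j` tuples of `T`. -/
def TjStar {R : Type} {m : ℕ} (T : Fin m → Tuple R) (K : Set R) (j : ℕ) : Set (↥K → ℕ) :=
  {f | (∀ A : ↥K, f A ∈ VD T A.1) ∧ ∃ i : Fin m, i.1 < j ∧ adjExt K (T i) f}

/-- `ν(G*)`: the maximum matching size of the subgraph of the `K`-extension
graph induced on `T_j ∪ T_j*`. -/
noncomputable def nuExtStar {R : Type} {m : ℕ} (T : Fin m → Tuple R) (K : Set R) (j : ℕ) : ℕ :=
  sSup {n : ℕ | ∃ M : Finset (Fin m × (↥K → ℕ)), IsExtMatching T K M ∧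
    (∀ e ∈ M, e.1.1 < j ∧ e.2 ∈ TjStar T K j) ∧ M.card = n}

/-- If the `K`-total part of `T` satisfies `sp⟨K⟩`, then some
minimum-cardinality removal set `U` making `sp⟨K⟩` hold consists entirely of
non-`K`-total tuples. -/
theorem stmt0 {R ι : Type} [Fintype R] [Fintype ι] (T : ι → Tuple R) (K : Set R)
    (h : spKey (fun i : {i : ι // KTotal K (T i)} => T i.1) K) :
    ∃ U : Finset ι,
      (∀ i ∈ U, ¬ KTotal K (T i)) ∧
      spKey (fun i : {i : ι // i ∉ U} => T i.1) K ∧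
      U.card = sInf {k : ℕ | ∃ S : Finset ι, S.card = k ∧
        spKey (fun i : {i : ι // i ∉ S} => T i.1) K} := by
  classical
  set Q : Set ℕ := {k : ℕ | ∃ S : Finset ι, S.card = k ∧
        spKey (fun i : {i : ι // i ∉ S} => T i.1) K} with hQ
  have hne : Q.Nonempty := by
    refine ⟨_, Finset.univ, rfl, fun _ _ => 0, ?_, ?_⟩
    · intro i; exact absurd (Finset.mem_univ _) i.2
    · intro i; exact absurd (Finset.mem_univ _) i.2
  obtain ⟨S, hSc, T', hT', hinj⟩ := Nat.sInf_mem hne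
  by_cases hP : ∃ p, KTotal K (T p)
  swap
  · push Not at hP
    exact ⟨S, fun i _ => hP i, ⟨T', hT', hinj⟩, hSc⟩
  obtain ⟨p, hp⟩ := hP
  obtain ⟨P', hP', hPinj⟩ := h
  have htot : ∀ i j, KTotal K (T i) → KTotal K (T j) → (∀ A ∈ K, T i A = T j A) → i = j := by
    intro i j hi hj hij
    have := hPinj ⟨i, hi⟩ ⟨j, hj⟩ (by
      intro A hA
      have h1 := (hP' ⟨i, hi⟩ A).1.resolve_left (hi A hA)
      have h2 := (hP' ⟨j, hj⟩ A).1.resolve_left (hj A hA)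
      have h3 := hij A hA
      simp only at h1 h2
      rw [h1, h2] at h3
      exact Option.some.inj h3)
    exact congrArg Subtype.val this
  have hv : ∀ A, ∃ v, ∃ q, KTotal K (T q) ∧ T q A = some v := by
    intro A
    obtain ⟨q, hq⟩ := (hP' ⟨p, hp⟩ A).2
    exact ⟨_, q.1, q.2, hq⟩
  choose v q hq hqv using hv
  let F : ι → R → ℕ := fun i A => if hi : i ∉ S then T' ⟨i, hi⟩ A else 0
  have hF : ∀ i, i ∉ S → ∀ A, (T i A = none ∨ T i A = some (F i A)) ∧
      ∃ j, j ∉ S ∧ T j A = some (F i A) := by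
    intro i hi A
    have h1 := hT' ⟨i, hi⟩ A
    obtain ⟨h2, j, hj⟩ := h1
    simp only [F, dif_pos hi]
    exact ⟨h2, j.1, j.2, hj⟩
  have hFinj : ∀ i j, i ∉ S → j ∉ S → (∀ A ∈ K, F i A = F j A) → i = j := by
    intro i j hi hj hij
    simp only [F, dif_pos hi, dif_pos hj] at hij
    exact congrArg Subtype.val (hinj ⟨i, hi⟩ ⟨j, hj⟩ hij)
  clear_value F
  let U : Finset ι := Finset.univ.filter (fun i => ¬ KTotal K (T i) ∧
    (i ∈ S ∨ ∃ t ∈ S, KTotal K (T t) ∧ ∀ A ∈ K, T t A = some (F i A)))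
  have hU : ∀ i, i ∈ U ↔ ¬ KTotal K (T i) ∧
    (i ∈ S ∨ ∃ t ∈ S, KTotal K (T t) ∧ ∀ A ∈ K, T t A = some (F i A)) := by
    intro i; simp [U]
  clear_value U
  have hkey : spKey (fun i : {i : ι // i ∉ U} => T i.1) K := by
    let W : ι → R → ℕ := fun i A => (T i A).getD (if A ∈ K then F i A else v A)
    have hWs : ∀ i A x, T i A = some x → W i A = x := by
      intro i A x hx; simp [W, hx]
    have hWF : ∀ i, i ∉ S → ∀ A ∈ K, W i A = F i A := by
      intro i hi A hA
      rcases (hF i hi A).1 with h1 | h1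
      · simp [W, h1, hA]
      · exact hWs _ _ _ h1
    have hWT : ∀ i, KTotal K (T i) → ∀ A ∈ K, T i A = some (W i A) := by
      intro i hi A hA
      obtain ⟨x, hx⟩ := Option.ne_none_iff_exists'.1 (hi A hA)
      rw [hWs _ _ _ hx, hx]
    have hST : ∀ i, i ∉ U → i ∈ S → KTotal K (T i) := by
      intro i hi hs
      by_contra hc
      exact hi ((hU i).2 ⟨hc, Or.inl hs⟩)
    have htU : ∀ i, KTotal K (T i) → i ∉ U := fun i hi hc => ((hU i).1 hc).1 hi
    have hmix : ∀ i j, i ∉ U → j ∉ U → i ∈ S → j ∉ S → (∀ A ∈ K, W i A = W j A) → i = j := by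
      intro i j hi hj hs hjs hij
      have hit := hST i hi hs
      by_cases hjt : KTotal K (T j)
      · exact htot i j hit hjt fun A hA => by rw [hWT i hit A hA, hWT j hjt A hA, hij A hA]
      · exact absurd ((hU j).2 ⟨hjt, Or.inr ⟨i, hs, hit, fun A hA => by
          rw [hWT i hit A hA, hij A hA, hWF j hjs A hA]⟩⟩) hj
    refine ⟨fun i => W i.1, ?_, ?_⟩
    · rintro ⟨i, hi⟩ A
      rcases hx : T i A with _ | x
      · refine ⟨Or.inl hx, ?_⟩
        by_cases hA : A ∈ K
        · have hs : i ∉ S := fun hs => hST i hi hs A hA hx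
          obtain ⟨j, hj, hjx⟩ := (hF i hs A).2
          rw [← hWF i hs A hA] at hjx
          by_cases hjU : j ∈ U
          · obtain ⟨_, h2 | ⟨t, ht, htt, hte⟩⟩ := (hU j).1 hjU
            · exact absurd h2 hj
            · refine ⟨⟨t, htU t htt⟩, ?_⟩
              have h3 := (hF j hj A).1.resolve_left (by rw [hjx]; simp)
              have h4 := hte A hA
              rw [← h3, hjx] at h4
              exact h4
          · exact ⟨⟨j, hjU⟩, hjx⟩
        · refine ⟨⟨q A, htU _ (hq A)⟩, ?_⟩
          simp [W, hx, hA, hqv]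
      · have := hWs i A x hx
        simp only [this]
        exact ⟨Or.inr hx, ⟨i, hi⟩, hx⟩
    · rintro ⟨i, hi⟩ ⟨j, hj⟩ hij
      simp only at hij
      apply Subtype.ext
      simp only
      by_cases hs : i ∈ S <;> by_cases hs' : j ∈ S
      · have h1 := hST i hi hs
        have h2 := hST j hj hs'
        exact htot i j h1 h2 fun A hA => by rw [hWT i h1 A hA, hWT j h2 A hA, hij A hA]
      · exact hmix i j hi hj hs hs' hij
      · exact (hmix j i hj hi hs' hs fun A hA => (hij A hA).symm).symm
      · exact hFinj i j hs hs' fun A hA => by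
          rw [← hWF i hs A hA, ← hWF j hs' A hA, hij A hA]
  refine ⟨U, fun i hi => ((hU i).1 hi).1, hkey, ?_⟩
  apply le_antisymm
  · rw [← hSc]
    have hg : ∀ i, ∃ t, i ∈ U → (t ∈ S ∧ ((i ∈ S ∧ t = i) ∨
        (i ∉ S ∧ KTotal K (T t) ∧ ∀ A ∈ K, T t A = some (F i A)))) := by
      intro i
      by_cases hi : i ∈ U
      · by_cases hs : i ∈ S
        · exact ⟨i, fun _ => ⟨hs, Or.inl ⟨hs, rfl⟩⟩⟩
        · obtain ⟨_, h2 | ⟨t, ht, htt, hte⟩⟩ := (hU i).1 hi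
          · exact absurd h2 hs
          · exact ⟨t, fun _ => ⟨ht, Or.inr ⟨hs, htt, hte⟩⟩⟩
      · exact ⟨i, fun h => absurd h hi⟩
    choose g hg using hg
    apply Finset.card_le_card_of_injOn g
    · intro i hi; exact (hg i hi).1
    · intro i hi j hj hij
      have ni := ((hU i).1 hi).1
      have nj := ((hU j).1 hj).1
      rcases (hg i hi).2 with ⟨_, h1⟩ | ⟨h1, h2, h3⟩ <;>
        rcases (hg j hj).2 with ⟨_, h4⟩ | ⟨h4, h5, h6⟩
      · rw [← h1, ← h4, hij]
      · rw [← hij, h1] at h5; exact absurd h5 ni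
      · rw [hij, h4] at h2; exact absurd h2 nj
      · refine hFinj i j h1 h4 fun A hA => ?_
        have h7 := h3 A hA
        rw [hij, h6 A hA] at h7
        exact (Option.some.inj h7).symm
  · exact Nat.sInf_le ⟨U, rfl, hkey⟩
end

section
/- For every rational number p/q with 0 ≤ p/q < 1 and every natural number N, there exists an incomplete table T over the two-attribute schema {A₁, A₂} with more than N rows such that g₃({A₁,A₂}) − g₅({A₁,A₂}) = p/q. -/
theorem aux_card {ι : Type} [Fintype ι] (U : ι → Tuple (Fin 2)) (A B : Finset ℕ)
    (hA : VD U 0 ⊆ A) (hB : VD U 1 ⊆ B) (h : spKey U Set.univ) :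
    Fintype.card ι ≤ A.card * B.card := by
  obtain ⟨T', hw, hinj⟩ := h
  rw [← Finset.card_product, ← Finset.card_univ]
  refine Finset.card_le_card_of_injOn (fun i => (T' i 0, T' i 1)) ?_ ?_
  · intro i _
    have h0 := hA (hw i 0).2
    have h1 := hB (hw i 1).2
    simp only [Finset.coe_product]
    exact ⟨h0, h1⟩
  · intro i _ j _ hij
    simp only [Prod.mk.injEq] at hij
    apply hinj
    intro a _
    fin_cases a
    · exact hij.1
    · exact hij.2

/-- The table: `c` total rows `(0,i)`, all the remaining rows are `(⊥,⊥)`. -/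
def tab (m c : ℕ) (i : Fin m) : Tuple (Fin 2) :=
  if i.1 < c then ![some 0, some i.1] else ![none, none]

theorem g3_tab (n c : ℕ) : g3KeyNum (tab (c + n) c) Set.univ = n := by
  apply le_antisymm
  · apply Nat.sInf_le
    refine ⟨Finset.univ.filter (fun i : Fin (c + n) => c ≤ i.1), ?_, ?_⟩
    · have h2 : (Finset.univ.filter (fun i : Fin (c + n) => c ≤ i.1)).map Fin.valEmbedding
          = Finset.Ico c (c + n) := by
        ext x
        simp only [Finset.mem_map, Finset.mem_filter, Finset.mem_univ, true_and,
          Fin.valEmbedding_apply, Finset.mem_Ico]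
        constructor
        · rintro ⟨a, ha, rfl⟩
          exact ⟨ha, a.2⟩
        · rintro ⟨h1, h2⟩
          exact ⟨⟨x, h2⟩, h1, rfl⟩
      rw [← Finset.card_map Fin.valEmbedding, h2]
      simp
    · refine ⟨fun i => ![0, i.1.1], ?_, ?_⟩
      · intro i a
        have hi : i.1.1 < c := by
          have := i.2
          simpa using this
        have e : tab (c + n) c i.1 = ![some 0, some i.1.1] := by simp [tab, hi]
        fin_cases a
        · exact ⟨Or.inr (by simp [e]), i, by simp [e]⟩
        · exact ⟨Or.inr (by simp [e]), i, by simp [e]⟩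
      · intro i j h
        have := h 1 trivial
        exact Subtype.ext (Fin.ext (by simpa using this))
  · apply le_csInf
    · refine ⟨_, Finset.univ, rfl, fun _ _ => 0, fun i => absurd (Finset.mem_univ _) i.2,
        fun i => absurd (Finset.mem_univ _) i.2⟩
    · rintro k ⟨S, rfl, h⟩
      have := aux_card _ {0} (Finset.range c) ?_ ?_ h
      · have h1 : Fintype.card {i : Fin (c + n) // i ∉ S} = c + n - S.card := by
          simp [Fintype.card_subtype_compl]
        rw [h1] at this
        simp at this
        omega
      · rintro v ⟨i, hi⟩
        simp only [tab] at hi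
        split_ifs at hi with h
        · simp at hi
          simp [hi]
        · simp at hi
      · rintro v ⟨i, hi⟩
        simp only [tab] at hi
        split_ifs at hi with h
        · simp at hi
          simp [← hi, h]
        · simp at hi

/-- The world used for the enlarged table. -/
def wld (m c t : ℕ) : Fin m ⊕ Fin t → Fin 2 → ℕ
  | Sum.inl i =>
    if i.1 < c then ![0, i.1]
    else if (i.1 - c) % (c + t) = c + (i.1 - c) / (c + t) then ![0, (i.1 - c) % (c + t)]
    else ![(i.1 - c) / (c + t) + 1, (i.1 - c) % (c + t)]
  | Sum.inr j => ![j.1 + 1, c + j.1]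

theorem g5_tab (n c t : ℕ) (hc : 0 < c) (hup : n ≤ t * (c + t))
    (hlo : ∀ s < t, s * (c + s) < n) : g5KeyNum (tab (c + n) c) Set.univ = t := by
  have key : spKey (Sum.elim (tab (c + n) c)
      (fun j : Fin t => ![some (j.1 + 1), some (c + j.1)])) Set.univ := by
    have hV0 : ∀ v < t + 1, v ∈ VD (Sum.elim (tab (c + n) c)
      (fun j : Fin t => ![some (j.1 + 1), some (c + j.1)])) 0 := by
      intro v hv
      rcases v with _ | v
      · exact ⟨Sum.inl ⟨0, by omega⟩, by simp [tab, hc]⟩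
      · exact ⟨Sum.inr ⟨v, by omega⟩, by simp⟩
    have hV1 : ∀ v < c + t, v ∈ VD (Sum.elim (tab (c + n) c)
      (fun j : Fin t => ![some (j.1 + 1), some (c + j.1)])) 1 := by
      intro v hv
      by_cases h : v < c
      · exact ⟨Sum.inl ⟨v, by omega⟩, by simp [tab, h]⟩
      · exact ⟨Sum.inr ⟨v - c, by omega⟩, by simp; omega⟩
    have hdiv : ∀ i : Fin (c + n), ¬ i.1 < c → (i.1 - c) / (c + t) < t := by
      intro i hi
      rw [Nat.div_lt_iff_lt_mul (by omega)]
      omega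
    have hmod : ∀ u, u % (c + t) < c + t := fun u => Nat.mod_lt _ (by omega)
    have hdm : ∀ i j : Fin (c + n), ¬ i.1 < c → ¬ j.1 < c →
        (i.1 - c) % (c + t) = (j.1 - c) % (c + t) → (i.1 - c) / (c + t) = (j.1 - c) / (c + t) →
        i = j := by
      intro i j hi hj h1 h2
      have e1 := Nat.div_add_mod (i.1 - c) (c + t)
      have e2 := Nat.div_add_mod (j.1 - c) (c + t)
      rw [h1, h2] at e1
      apply Fin.ext
      omega
    refine ⟨wld (c + n) c t, ?_, ?_⟩
    · rintro (i | j) a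
      · have hd := hdiv i
        have hm := hmod (i.1 - c)
        fin_cases a
        · refine ⟨?_, hV0 _ ?_⟩
          · simp only [tab, wld, Sum.elim_inl]
            split_ifs <;> simp
          · simp only [wld]
            split_ifs with h1 h2
            · simp
            · simp
            · simpa using hd h1
        · refine ⟨?_, hV1 _ ?_⟩
          · simp only [tab, wld, Sum.elim_inl]
            split_ifs <;> simp
          · simp only [wld]
            split_ifs with h1 h2
            · simp; omega
            · simpa using hm
            · simpa using hm
      · have := j.2
        fin_cases a
        · exact ⟨Or.inr (by simp [wld]), hV0 _ (by simp [wld])⟩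
        · exact ⟨Or.inr (by simp [wld]), hV1 _ (by simp [wld])⟩
    · intro i j h
      have h0 := h 0 trivial
      have h1 := h 1 trivial
      rcases i with i | i <;> rcases j with j | j
      · have := hdm i j
        congr 1
        simp only [wld] at h0 h1
        generalize (i.1 - c) / (c + t) = a1 at *
        generalize (j.1 - c) / (c + t) = a2 at *
        generalize (i.1 - c) % (c + t) = b1 at *
        generalize (j.1 - c) % (c + t) = b2 at *
        split_ifs at h0 h1 <;> simp at h0 h1
        all_goals first
          | exact Fin.ext h1
          | omega
          | (apply this <;> omega)
      · exfalso
        simp only [wld] at h0 h1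
        split_ifs at h0 h1 <;> simp at h0 h1
        omega
      · exfalso
        simp only [wld] at h0 h1
        split_ifs at h0 h1 <;> simp at h0 h1
        omega
      · congr 1
        simp [wld] at h0
        exact Fin.ext h0
  apply le_antisymm
  · exact Nat.sInf_le ⟨_, key⟩
  · refine le_csInf (Set.nonempty_of_mem (x := t) ⟨_, key⟩) ?_
    rintro s ⟨S, h⟩
    by_contra! hs
    have hb := hlo s hs
    have := aux_card _ (insert 0 (Finset.univ.image (fun j => (S j 0).getD 0)))
      (Finset.range c ∪ (Finset.univ.image (fun j => (S j 1).getD 0))) ?_ ?_ h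
    · have c1 : (insert 0 (Finset.univ.image (fun j => (S j 0).getD 0))).card ≤ s + 1 := by
        refine (Finset.card_insert_le _ _).trans ?_
        have := Finset.card_image_le (s := Finset.univ) (f := fun j => (S j 0).getD 0)
        simp at this
        omega
      have c2 : (Finset.range c ∪ (Finset.univ.image (fun j => (S j 1).getD 0))).card ≤ c + s := by
        refine (Finset.card_union_le _ _).trans ?_
        have := Finset.card_image_le (s := Finset.univ) (f := fun j => (S j 1).getD 0)
        simp at this
        simp
        omega
      have := this.trans (Nat.mul_le_mul c1 c2)
      simp at this
      nlinarith
    · rintro v ⟨i | j, hi⟩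
      · simp only [tab, Sum.elim_inl] at hi
        split_ifs at hi with h
        · simp at hi
          simp [hi]
        · simp at hi
      · simp only [Sum.elim_inr] at hi
        simp only [Finset.coe_insert, Finset.coe_image]
        exact Or.inr ⟨j, by simp, by simp [hi]⟩
    · rintro v ⟨i | j, hi⟩
      · simp only [tab, Sum.elim_inl] at hi
        split_ifs at hi with h
        · simp at hi
          simp [← hi, h]
        · simp at hi
      · simp only [Sum.elim_inr] at hi
        simp only [Finset.coe_union, Finset.coe_image]
        exact Or.inr ⟨j, by simp, by simp [hi]⟩

/-- For every rational `0 ≤ p/q < 1` and every `N`, there is a table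
over a two-attribute schema with more than `N` rows such that
`g₃({A₁,A₂}) − g₅({A₁,A₂}) = p/q`. -/
theorem stmt2 (p q : ℕ) (hq : 0 < q) (hpq : p < q) (N : ℕ) :
    ∃ m : ℕ, N < m ∧ ∃ T : Fin m → Tuple (Fin 2),
      g3Key T (Set.univ : Set (Fin 2)) - g5Key T (Set.univ : Set (Fin 2)) = (p : ℚ) / q := by
  obtain ⟨d, hd, rfl⟩ : ∃ d, 0 < d ∧ q = p + d := ⟨q - p, by omega, by omega⟩
  obtain ⟨t, ht⟩ : ∃ t, t = (p + d) / d := ⟨_, rfl⟩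
  have ht1 : t * d ≤ p + d := by rw [ht]; exact Nat.div_mul_le_self _ _
  have ht2 : p + d < (t + 1) * d := by
    rw [ht]
    have := Nat.lt_mul_div_succ (p + d) hd
    linarith [mul_comm d ((p + d) / d + 1)]
  have ht0 : 1 ≤ t := by
    rw [ht, Nat.one_le_div_iff hd]
    omega
  obtain ⟨k, hk⟩ : ∃ k, k = N + t + 1 := ⟨_, rfl⟩
  have hdk : k ≤ d * k := Nat.le_mul_of_pos_left _ hd
  obtain ⟨c, hc⟩ : ∃ c, c + t = d * k := ⟨d * k - t, by omega⟩
  have hc0 : 0 < c := by omega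
  have hm : c + (p * k + t) = (p + d) * k := by rw [add_mul]; omega
  have hup : p * k + t ≤ t * (c + t) := by
    rw [hc]
    have h1 : p + 1 ≤ t * d := by rw [add_mul] at ht2; omega
    have h2 := Nat.mul_le_mul_right k h1
    rw [← mul_assoc]
    rw [add_mul] at h2
    omega
  have hlo : ∀ s < t, s * (c + s) < p * k + t := by
    intro s hs
    obtain ⟨r, rfl⟩ : ∃ r, t = r + 1 := ⟨t - 1, by omega⟩
    have h1 : s * (c + s) ≤ r * (c + r) := Nat.mul_le_mul (by omega) (by omega)
    have h2 : r * d ≤ p := by rw [add_mul] at ht1; omega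
    have h3 := Nat.mul_le_mul_right k h2
    have h4 : r * (c + r) ≤ r * (d * k) := Nat.mul_le_mul_left _ (by omega)
    rw [← mul_assoc] at h4
    omega
  refine ⟨c + (p * k + t), ?_, tab _ c, ?_⟩
  · omega
  · unfold g3Key g5Key
    rw [g3_tab _ _, g5_tab _ _ t hc0 hup hlo, Fintype.card_fin, hm]
    have hk0 : (k : ℚ) ≠ 0 := by
      have : k ≠ 0 := by omega
      exact_mod_cast this
    have hq0 : ((p + d : ℕ) : ℚ) ≠ 0 := by
      have : p + d ≠ 0 := by omega
      exact_mod_cast this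
    rw [← sub_div, div_eq_div_iff (by push_cast at *; exact mul_ne_zero hq0 hk0) hq0]
    push_cast
    ring
end

section
/- Let T be an incomplete table over schema R and let σ : X →sp Y be a strongly possible functional dependency for some X, Y ⊆ R. Then g₃(σ) ≥ g₅(σ), where g₃(σ) is the minimum ratio |S|/|T| over subsets S of the tuples of T such that T∖S satisfies X →sp Y, and g₅(σ) is the minimum ratio |S|/|T| over multisets S of tuples such that T∪S (with active domains computed in the enlarged table) satisfies X →sp Y. -/
open Classical in
theorem core_aux {R ι : Type} (T : ι → Tuple R) (X Y : Set R) (hX : X.Nonempty)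
    (S : Finset ι) (r0 : ι) (hr0 : r0 ∈ S) (W V : ι → R → ℕ)
    (hW1 : ∀ i, i ∉ S → ∀ A, T i A = none ∨ T i A = some (W i A))
    (hW2 : ∀ i, i ∉ S → ∀ A, ∃ j, T j A = some (W i A))
    (hW3 : ∀ i j, i ∉ S → j ∉ S → (∀ A ∈ X, W i A = W j A) → ∀ A ∈ Y, W i A = W j A)
    (hV1 : ∀ i A, T i A = none ∨ T i A = some (V i A))
    (hV3 : ∀ i j, (∀ A ∈ X, V i A = V j A) → ∀ A ∈ Y, V i A = V j A)
    (z : ι → ℕ) (hz : Function.Injective z) (hzf : ∀ i j A, T j A ≠ some (z i)) :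
    ∃ P : {i // i ∈ S} → Tuple R, spFD (Sum.elim T P) X Y := by
  let XT : ι → Prop := fun i => ∀ A ∈ X, T i A ≠ none
  let Hit : ι → ι → Prop := fun i t => t ∈ S ∧ XT t ∧ ∀ A ∈ X, T t A = some (W i A)
  let B : ι → Prop := fun i => i ∉ S ∧ ¬ XT i ∧ ∃ t, Hit i t
  have hr : ∃ r : ι → ι, ∀ i, (∃ t, Hit i t) → Hit i (r i) :=
    ⟨fun i => if h : ∃ t, Hit i t then h.choose else i, fun i h => by
      simp only [dif_pos h]; exact h.choose_spec⟩
  obtain ⟨r, hr⟩ := hr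
  have hq : ∃ q : ι → ι, ∀ t, (∃ i, B i ∧ r i = t) → B (q t) ∧ r (q t) = t :=
    ⟨fun t => if h : ∃ i, B i ∧ r i = t then h.choose else t, fun t h => by
      simp only [dif_pos h]; exact h.choose_spec⟩
  obtain ⟨q, hq⟩ := hq
  let Q : ι → R → ℕ := fun t A => if ∃ i, B i ∧ r i = t then W (q t) A else V t A
  let P : ι → R → ℕ := fun t A =>
    if XT t then (if A ∈ X then z t else Q t A) else (T t A).getD (z t)
  let PP : {i // i ∈ S} → Tuple R := fun t A => some (P t.1 A)
  let φ : R → ℕ → ℕ := fun A v => if v ∈ VD (Sum.elim T PP) A then v else P r0 A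
  let U : ι → R → ℕ := fun i A =>
    if XT i ∧ (i ∈ S ∨ ∃ t, Hit i t) then φ A (V i A)
    else if i ∈ S then (T i A).getD (z i)
    else if ∃ t, Hit i t then (if A ∈ X then (T i A).getD (z (r i)) else W i A)
    else W i A
  have memT : ∀ j A v, T j A = some v → v ∈ VD (Sum.elim T PP) A := fun j A v h => ⟨Sum.inl j, h⟩
  have memP : ∀ t, t ∈ S → ∀ A, P t A ∈ VD (Sum.elim T PP) A :=
    fun t h A => ⟨Sum.inr ⟨t, h⟩, rfl⟩
  have memφ : ∀ A v, φ A v ∈ VD (Sum.elim T PP) A := by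
    intro A v
    by_cases h : v ∈ VD (Sum.elim T PP) A
    · simpa only [φ, if_pos h] using h
    · simpa only [φ, if_neg h] using memP r0 hr0 A
  have φT : ∀ i A, T i A = none ∨ T i A = some (φ A (V i A)) := by
    intro i A
    rcases hV1 i A with h | h
    · exact Or.inl h
    · right
      have := memT i A _ h
      simpa only [φ, if_pos this] using h
  -- classification
  let K1 : (R → ℕ) → Prop := fun u => ∃ i, i ∉ S ∧ (¬ ∃ t, Hit i t) ∧ u = W i
  let K2 : (R → ℕ) → Prop := fun u => ∃ i, XT i ∧ (i ∈ S ∨ (i ∉ S ∧ ∃ t, Hit i t)) ∧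
    (∀ A ∈ X, T i A = some (u A)) ∧ ∀ A, u A = φ A (V i A)
  let K3 : (R → ℕ) → Prop := fun u => ∃ t, ¬ XT t ∧ u = fun A => (T t A).getD (z t)
  let K4 : (R → ℕ) → Prop := fun u => ∃ t, XT t ∧ (∃ A ∈ X, u A = z t) ∧
    (∀ A ∈ X, u A = z t ∨ ∃ j, T j A = some (u A)) ∧ ∀ A ∈ Y, A ∉ X → u A = Q t A
  have zP : ∀ t, t ∈ S → XT t → ∀ A ∈ X, z t ∈ VD (Sum.elim T PP) A := by
    intro t h hx A hA
    have := memP t h A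
    simpa only [P, if_pos hx, if_pos hA] using this
  let UU : ι ⊕ {i // i ∈ S} → R → ℕ := Sum.elim U (fun t => P t.1)
  have hK3 : ∀ t, ¬ XT t → K3 (fun A => (T t A).getD (z t)) := fun t h => ⟨t, h, rfl⟩
  have main : ∀ ρ, (∀ A, (Sum.elim T PP ρ A = none ∨ Sum.elim T PP ρ A = some (UU ρ A)) ∧
      UU ρ A ∈ VD (Sum.elim T PP) A) ∧ (K1 (UU ρ) ∨ K2 (UU ρ) ∨ K3 (UU ρ) ∨ K4 (UU ρ)) := by
    rintro (i | ⟨t, ht⟩)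
    · change (∀ A, (T i A = none ∨ T i A = some (U i A)) ∧ U i A ∈ VD (Sum.elim T PP) A) ∧
        (K1 (U i) ∨ K2 (U i) ∨ K3 (U i) ∨ K4 (U i))
      by_cases c1 : XT i ∧ (i ∈ S ∨ ∃ t, Hit i t)
      · have e : U i = fun A => φ A (V i A) := by funext A; simp only [U, if_pos c1]
        rw [e]
        refine ⟨fun A => ⟨φT i A, memφ A _⟩, Or.inr (Or.inl ⟨i, c1.1, ?_, ?_, fun A => rfl⟩)⟩
        · by_cases h : i ∈ S
          · exact Or.inl h
          · exact Or.inr ⟨h, c1.2.resolve_left h⟩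
        · intro A hA
          exact (φT i A).resolve_left (c1.1 A hA)
      by_cases c2 : i ∈ S
      · have nx : ¬ XT i := fun h => c1 ⟨h, Or.inl c2⟩
        have e : U i = fun A => (T i A).getD (z i) := by
          funext A; simp only [U, if_neg c1, if_pos c2]
        have e2 : (fun A => (T i A).getD (z i)) = P i := by
          funext A; simp only [P, if_neg nx]
        rw [e]
        refine ⟨fun A => ⟨?_, ?_⟩, Or.inr (Or.inr (Or.inl (hK3 i nx)))⟩
        · cases h : T i A <;> simp [h]
        · rw [e2]; exact memP i c2 A
      by_cases c3 : ∃ t, Hit i t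
      · have nx : ¬ XT i := fun h => c1 ⟨h, Or.inr c3⟩
        have e : U i = fun A => if A ∈ X then (T i A).getD (z (r i)) else W i A := by
          funext A; simp only [U, if_neg c1, if_neg c2, if_pos c3]
        rw [e]
        obtain ⟨h1, h2, h3⟩ := hr i c3
        have hb : ∃ j, B j ∧ r j = r i := ⟨i, ⟨c2, nx, c3⟩, rfl⟩
        refine ⟨fun A => ⟨?_, ?_⟩, Or.inr (Or.inr (Or.inr ⟨r i, h2, ?_, ?_, ?_⟩))⟩
        · by_cases hA : A ∈ X
          · simp only [if_pos hA]; cases h : T i A <;> simp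
          · simp only [if_neg hA]; exact hW1 i c2 A
        · by_cases hA : A ∈ X
          · simp only [if_pos hA]
            cases h : T i A with
            | none => exact zP _ h1 h2 A hA
            | some v => exact memT i A v h
          · simp only [if_neg hA]
            obtain ⟨j, hj⟩ := hW2 i c2 A
            exact memT j A _ hj
        · have : ∃ A ∈ X, T i A = none := by
            by_contra hc
            exact nx fun A hA h => hc ⟨A, hA, h⟩
          obtain ⟨A, hA, h⟩ := this
          exact ⟨A, hA, by simp [hA, h]⟩
        · intro A hA
          simp only [if_pos hA]
          cases h : T i A with
          | none => exact Or.inl rfl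
          | some v => exact Or.inr ⟨i, h⟩
        · intro A hA hAX
          obtain ⟨⟨b1, b2, b3⟩, b4⟩ := hq (r i) hb
          simp only [if_neg hAX, Q, if_pos hb]
          refine hW3 i _ c2 b1 ?_ A hA
          intro A' hA'
          have h5 := (hr _ b3).2.2 A' hA'
          rw [b4, h3 A' hA'] at h5
          exact Option.some.inj h5
      · have e : U i = W i := by
          funext A; simp only [U, if_neg c1, if_neg c2, if_neg c3]
        rw [e]
        refine ⟨fun A => ⟨hW1 i c2 A, ?_⟩, Or.inl ⟨i, c2, c3, rfl⟩⟩
        obtain ⟨j, hj⟩ := hW2 i c2 A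
        exact memT j A _ hj
    · refine ⟨fun A => ⟨Or.inr rfl, memP t ht A⟩, ?_⟩
      change K1 (P t) ∨ K2 (P t) ∨ K3 (P t) ∨ K4 (P t)
      by_cases hx : XT t
      · right; right; right
        obtain ⟨A0, hA0⟩ := hX
        refine ⟨t, hx, ⟨A0, hA0, ?_⟩, ?_, ?_⟩
        · simp only [P, if_pos hx, if_pos hA0]
        · intro A hA; left; simp only [P, if_pos hx, if_pos hA]
        · intro A _ hA; simp only [P, if_pos hx, if_neg hA]
      · right; right; left
        refine ⟨t, hx, ?_⟩
        funext A; simp only [P, if_neg hx]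
  have tagN : ∀ u, K1 u ∨ K2 u → ∀ A ∈ X, ∃ j, T j A = some (u A) := by
    rintro u (⟨i, h1, h2, rfl⟩ | ⟨i, h1, h2, h3, h4⟩) A hA
    · exact hW2 i h1 A
    · exact ⟨i, h3 A hA⟩
  have tagS3 : ∀ t, ¬ XT t → (∃ A ∈ X, (T t A).getD (z t) = z t) ∧
      ∀ A ∈ X, (T t A).getD (z t) = z t ∨ ∃ j, T j A = some ((T t A).getD (z t)) := by
    intro t ht
    constructor
    · have : ∃ A ∈ X, T t A = none := by
        by_contra hc
        exact ht fun A hA h => hc ⟨A, hA, h⟩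
      obtain ⟨A, hA, h⟩ := this
      exact ⟨A, hA, by simp [h]⟩
    · intro A hA
      cases h : T t A with
      | none => exact Or.inl rfl
      | some v => exact Or.inr ⟨t, h⟩
  have tagS : ∀ u, K3 u ∨ K4 u → ∃ t, ∃ A ∈ X, u A = z t := by
    rintro u (⟨t, h1, rfl⟩ | ⟨t, h1, ⟨A, hA, h⟩, h3, h4⟩)
    · obtain ⟨A, hA, h⟩ := (tagS3 t h1).1
      exact ⟨t, A, hA, h⟩
    · exact ⟨t, A, hA, h⟩
  have tagNS : ∀ u u', (∀ A ∈ X, u A = u' A) → (K1 u ∨ K2 u) → (K3 u' ∨ K4 u') → False := by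
    intro u u' he h h'
    obtain ⟨t, A, hA, h2⟩ := tagS u' h'
    obtain ⟨j, hj⟩ := tagN u h A hA
    rw [he A hA, h2] at hj
    exact hzf _ _ _ hj
  have tagEq : ∀ (u u' : R → ℕ) (t t' : ι), (∀ A ∈ X, u A = u' A) → (∃ A ∈ X, u A = z t) →
      (∀ A ∈ X, u' A = z t' ∨ ∃ j, T j A = some (u' A)) → t = t' := by
    rintro u u' t t' he ⟨A, hA, h⟩ h'
    rcases h' A hA with h2 | ⟨j, hj⟩
    · exact hz (by rw [← h, ← h2, he A hA])
    · rw [← he A hA, h] at hj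
      exact absurd hj (hzf _ _ _)
  have c12 : ∀ u u', (∀ A ∈ X, u A = u' A) → K1 u → K2 u' → False := by
    rintro u u' he ⟨i, h1, h2, rfl⟩ ⟨j, k1, k2, k3, k4⟩
    rcases k2 with k2 | ⟨k2, t, t1, t2, t3⟩
    · exact h2 ⟨j, k2, k1, fun A hA => by rw [k3 A hA, he A hA]⟩
    · refine h2 ⟨t, t1, t2, fun A hA => ?_⟩
      rw [t3 A hA, he A hA, ← k3 A hA]
      exact ((hW1 j k2 A).resolve_left (k1 A hA)).symm
  have c34 : ∀ u u', (∀ A ∈ X, u A = u' A) → K3 u → K4 u' → False := by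
    rintro u u' he ⟨t, h1, rfl⟩ ⟨t', k1, k2, k3, k4⟩
    have := tagEq _ u' t t' he (tagS3 t h1).1 k3
    exact h1 (this ▸ k1)
  refine ⟨PP, UU, fun ρ A => (main ρ).1 A, ?_⟩
  intro ρ ρ' he A hA
  have he' : ∀ A ∈ X, UU ρ' A = UU ρ A := fun A hA => (he A hA).symm
  have m := (main ρ).2
  have m' := (main ρ').2
  generalize UU ρ = u at *
  generalize UU ρ' = u' at *
  rcases m with m | m | m | m <;> rcases m' with m' | m' | m' | m'
  · obtain ⟨i, h1, h2, rfl⟩ := m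
    obtain ⟨j, k1, k2, rfl⟩ := m'
    exact hW3 i j h1 k1 he A hA
  · exact (c12 _ _ he m m').elim
  · exact (tagNS _ _ he (Or.inl m) (Or.inl m')).elim
  · exact (tagNS _ _ he (Or.inl m) (Or.inr m')).elim
  · exact (c12 _ _ he' m' m).elim
  · obtain ⟨i, h1, h2, h3, h4⟩ := m
    obtain ⟨j, k1, k2, k3, k4⟩ := m'
    rw [h4, k4]
    congr 1
    refine hV3 i j ?_ A hA
    intro A' hA'
    have e1 := (hV1 i A').resolve_left (h1 A' hA')
    have e2 := (hV1 j A').resolve_left (k1 A' hA')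
    rw [h3 A' hA'] at e1
    rw [k3 A' hA'] at e2
    rw [← Option.some.inj e1, ← Option.some.inj e2, he A' hA']
  · exact (tagNS _ _ he (Or.inr m) (Or.inl m')).elim
  · exact (tagNS _ _ he (Or.inr m) (Or.inr m')).elim
  · exact (tagNS _ _ he' (Or.inl m') (Or.inl m)).elim
  · exact (tagNS _ _ he' (Or.inr m') (Or.inl m)).elim
  · obtain ⟨t, h1, rfl⟩ := m
    obtain ⟨t', k1, rfl⟩ := m'
    have := tagEq _ _ t t' he (tagS3 t h1).1 (tagS3 t' k1).2
    rw [this]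
  · exact (c34 _ _ he m m').elim
  · exact (tagNS _ _ he' (Or.inl m') (Or.inr m)).elim
  · exact (tagNS _ _ he' (Or.inr m') (Or.inr m)).elim
  · exact (c34 _ _ he' m' m).elim
  · obtain ⟨t, h1, h2, h3, h4⟩ := m
    obtain ⟨t', k1, k2, k3, k4⟩ := m'
    have := tagEq _ _ t t' he h2 k3
    by_cases hAX : A ∈ X
    · exact he A hAX
    · rw [h4 A hA hAX, k4 A hA hAX, this]

open Classical in
theorem core_empty {R ι : Type} (T : ι → Tuple R) (X Y : Set R) (hX : X = ∅)
    (S : Finset ι) (r0 : ι) (hr0 : r0 ∈ S) (V : ι → R → ℕ)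
    (hV1 : ∀ i A, T i A = none ∨ T i A = some (V i A))
    (hV3 : ∀ i j, (∀ A ∈ X, V i A = V j A) → ∀ A ∈ Y, V i A = V j A) :
    ∃ P : {i // i ∈ S} → Tuple R, spFD (Sum.elim T P) X Y := by
  subst hX
  have hV : ∀ i j, ∀ A ∈ Y, V i A = V j A := fun i j => hV3 i j (by simp)
  refine ⟨fun _ A => some (V r0 A), Sum.elim
    (fun i A => (T i A).getD (V r0 A)) (fun _ => V r0), ?_, ?_⟩
  · rintro (i | t) A
    · cases h : T i A with
      | none => exact ⟨Or.inl h, Sum.inr ⟨r0, hr0⟩, by simp [h]⟩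
      | some v => exact ⟨Or.inr (by simp [h]), Sum.inl i, by simp [h]⟩
    · exact ⟨Or.inr rfl, Sum.inr t, rfl⟩
  · have key : ∀ i, ∀ A ∈ Y, (T i A).getD (V r0 A) = V r0 A := by
      intro i A hA
      rcases hV1 i A with h | h
      · simp [h]
      · simp [h, hV i r0 A hA]
    rintro (i | t) (j | t') _ A hA
    · simp [key _ A hA]
    · simp [key _ A hA]
    · simp [key _ A hA]
    · rfl

theorem spFD_reindex {R ι κ κ' : Type} (T : ι → Tuple R) (P : κ → Tuple R) (e : κ' ≃ κ)
    (X Y : Set R) (h : spFD (Sum.elim T P) X Y) : spFD (Sum.elim T (P ∘ e)) X Y := by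
  obtain ⟨T', h1, h2⟩ := h
  have hc : ∀ ρ, Sum.elim T (P ∘ e) ρ = Sum.elim T P (Sum.map id e ρ) := by
    rintro (i | t) <;> rfl
  refine ⟨fun ρ => T' (Sum.map id e ρ), ?_, fun i j => h2 _ _⟩
  intro ρ A
  rw [hc]
  refine ⟨(h1 _ A).1, ?_⟩
  obtain ⟨ρ', hρ'⟩ := (h1 (Sum.map id e ρ) A).2
  refine ⟨Sum.map id e.symm ρ', ?_⟩
  rw [hc, ← hρ']
  rcases ρ' with i | t <;> simp

theorem fresh_aux {R ι : Type} [Fintype R] [Fintype ι] (T : ι → Tuple R) :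
    ∃ z : ι → ℕ, Function.Injective z ∧ ∀ i j A, T j A ≠ some (z i) := by
  have e := Fintype.equivFin ι
  have hf : (Set.range fun p : ι × R => (T p.1 p.2).getD 0).Finite := Set.finite_range _
  obtain ⟨N, hN⟩ := hf.bddAbove
  refine ⟨fun i => N + 1 + (e i : ℕ), ?_, ?_⟩
  · intro i j h
    apply e.injective
    apply Fin.ext
    simpa using h
  · intro i j A h
    have := hN ⟨(j, A), rfl⟩
    simp only [h, Option.getD_some] at this
    omega

/-- For any spFD `σ : X →sp Y`, `g₃(σ) ≥ g₅(σ)`. -/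
theorem stmt3 {R ι : Type} [Fintype R] [Fintype ι] (T : ι → Tuple R) (X Y : Set R) :
    g5FD T X Y ≤ g3FD T X Y := by
  classical
  unfold g5FD g3FD
  have key : g5FDNum T X Y ≤ g3FDNum T X Y := by
    by_cases hne : {p : ℕ | ∃ S : Fin p → Tuple R, spFD (Sum.elim T S) X Y}.Nonempty
    swap
    · rw [Set.not_nonempty_iff_eq_empty] at hne
      simp [g5FDNum, hne]
    have h3 : {k : ℕ | ∃ S : Finset ι, S.card = k ∧
        spFD (fun i : {i : ι // i ∉ S} => T i.1) X Y}.Nonempty := by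
      refine ⟨_, Finset.univ, rfl, fun _ _ => 0, ?_, ?_⟩
      · intro i; exact absurd (Finset.mem_univ _) i.2
      · intro i; exact absurd (Finset.mem_univ _) i.2
    obtain ⟨S, hS, W, hW, hWF⟩ := Nat.sInf_mem h3
    change S.card = g3FDNum T X Y at hS
    rw [← hS]
    apply Nat.sInf_le
    suffices h : ∃ P : {i // i ∈ S} → Tuple R, spFD (Sum.elim T P) X Y by
      obtain ⟨P, hP⟩ := h
      exact ⟨_, spFD_reindex T P S.equivFin.symm X Y hP⟩
    obtain ⟨p, S0, V, hV, hVF⟩ := hne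
    have hV1 : ∀ i A, T i A = none ∨ T i A = some (V (Sum.inl i) A) :=
      fun i A => (hV (Sum.inl i) A).1
    have hV3 : ∀ i j, (∀ A ∈ X, V (Sum.inl i) A = V (Sum.inl j) A) →
        ∀ A ∈ Y, V (Sum.inl i) A = V (Sum.inl j) A := fun i j => hVF _ _
    rcases S.eq_empty_or_nonempty with h0 | ⟨r0, hr0⟩
    · subst h0
      refine ⟨fun _ _ => none, Sum.elim (fun i => W ⟨i, by simp⟩) (fun _ _ => 0), ?_, ?_⟩
      · rintro (i | ⟨t, ht⟩) A
        · refine ⟨(hW ⟨i, by simp⟩ A).1, ?_⟩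
          obtain ⟨j, hj⟩ := (hW ⟨i, by simp⟩ A).2
          exact ⟨Sum.inl j.1, hj⟩
        · simp at ht
      · rintro (i | ⟨t, ht⟩) (j | ⟨t', ht'⟩)
        · exact hWF _ _
        · simp at ht'
        · simp at ht
        · simp at ht
    rcases X.eq_empty_or_nonempty with hX | hX
    · exact core_empty T X Y hX S r0 hr0 (fun i => V (Sum.inl i)) hV1 hV3
    obtain ⟨z, hz, hzf⟩ := fresh_aux T
    let W' : ι → R → ℕ := fun i => if h : i ∉ S then W ⟨i, h⟩ else fun _ => 0
    have eW : ∀ i (h : i ∉ S), W' i = W ⟨i, h⟩ := fun i h => dif_pos h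
    refine core_aux T X Y hX S r0 hr0 W' (fun i => V (Sum.inl i)) ?_ ?_ ?_ hV1 hV3 z hz hzf
    · intro i h A
      rw [eW i h]
      exact (hW ⟨i, h⟩ A).1
    · intro i h A
      rw [eW i h]
      obtain ⟨j, hj⟩ := (hW ⟨i, h⟩ A).2
      exact ⟨j.1, hj⟩
    · intro i j hi hj
      rw [eW i hi, eW j hj]
      exact hWF _ _
  gcongr
end

section
/- There is a constant c such that for every rational number p/q with 0 ≤ p/q < 1 and every natural number N, there exists an incomplete table T with more than N rows over a schema R with at most c attributes, and sets X, Y ⊆ R, such that for the strongly possible functional dependency σ : X →sp Y one has g₃(σ) − g₅(σ) = p/q. -/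
/-- the table -/
def tabT (n m : ℕ) : Fin m → Tuple (Fin 3) := fun i A =>
  if i.1 < n then (if A = 2 then some (i.1 + 1) else none) else some 0

lemma tab_g3 (n m : ℕ) (h : n < m) : g3FDNum (tabT n m) {0, 1} {2} = n := by
  unfold g3FDNum
  have hcard : (Finset.univ.filter (fun i : Fin m => i.1 < n)).card = n := by
    rw [Fin.card_filter_val_lt]; omega
  apply IsLeast.csInf_eq
  constructor
  · refine ⟨_, hcard, fun _ _ => 0, ?_, ?_⟩
    · rintro ⟨i, hi⟩ A
      have hi' : ¬ i.1 < n := by simpa using hi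
      exact ⟨Or.inr (by simp [tabT, hi']), ⟨⟨i, hi⟩, by simp [tabT, hi']⟩⟩
    · intros; rfl
  · rintro k ⟨S, rfl, T', hw, hfd⟩
    rw [← hcard]
    apply Finset.card_le_card
    intro i hi
    have hin : i.1 < n := by simpa using hi
    by_contra hiS
    have key : ∀ (j : {i : Fin m // i ∉ S}) (A : Fin 3), A ≠ 2 →
        T' j A = 0 ∧ ∃ l : {i : Fin m // i ∉ S}, ¬ l.1.1 < n := by
      intro j A hA
      obtain ⟨l, hl⟩ := (hw j A).2
      by_cases hln : l.1.1 < n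
      · simp [tabT, hln, hA] at hl
      · simp [tabT, hln] at hl
        exact ⟨hl.symm, l, hln⟩
    obtain ⟨_, l, hl⟩ := key ⟨i, hiS⟩ 0 (by decide)
    have := hfd ⟨i, hiS⟩ l (by
      intro A hA
      have hA2 : A ≠ 2 := by rcases hA with rfl | rfl <;> decide
      rw [(key _ A hA2).1, (key _ A hA2).1]) 2 rfl
    have h1 := (hw ⟨i, hiS⟩ 2).1
    have h2 := (hw l 2).1
    simp [tabT, hin] at h1
    simp [tabT, hl] at h2
    omega

lemma tab_inj (s i j : ℕ)
    (h1 : i / s = j / s)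
    (h2 : (if i % s < i / s then i % s else i % s + 1) =
      (if j % s < j / s then j % s else j % s + 1)) : i = j := by
  have h3 : i % s = j % s := by
    rw [h1] at h2
    split_ifs at h2 <;> omega
  rw [← Nat.div_add_mod i s, ← Nat.div_add_mod j s, h1, h3]

lemma tab_g5 (s m : ℕ) (h : s * s + s < m) :
    g5FDNum (tabT (s * s + s) m) {0, 1} {2} = s := by
  unfold g5FDNum
  apply IsLeast.csInf_eq
  constructor
  · refine ⟨fun i A => if A = 2 then some 0 else some (i.1 + 1), ?_⟩
    let f : ℕ → Fin 3 → ℕ := fun i A =>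
      if A = 2 then i + 1 else if A = 0 then i / s
        else (if i % s < i / s then i % s else i % s + 1)
    have hdiag : ∀ i, f i 0 ≠ f i 1 := by
      intro i
      simp only [f]
      simp
      split_ifs <;> omega
    let T' : Fin m ⊕ Fin s → Fin 3 → ℕ := Sum.elim
      (fun i A => if i.1 < s * s + s then f i.1 A else 0)
      (fun i A => if A = 2 then 0 else i.1 + 1)
    have hvd : ∀ (A : Fin 3) (v : ℕ), A ≠ 2 → v ≤ s →
        v ∈ VD (Sum.elim (tabT (s * s + s) m)
          (fun (i : Fin s) A => if A = 2 then some 0 else some (i.1 + 1))) A := by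
      intro A v hA hv
      rcases v with _ | v
      · exact ⟨Sum.inl ⟨s * s + s, h⟩, by simp [tabT]⟩
      · exact ⟨Sum.inr ⟨v, hv⟩, by simp [hA]⟩
    refine ⟨T', ?_, ?_⟩
    · rintro (i | i) A
      · by_cases hi : i.1 < s * s + s
        · by_cases hA : A = 2
          · subst hA
            refine ⟨Or.inr (by simp [tabT, T', f, hi]), Sum.inl i, by simp [tabT, T', f, hi]⟩
          · refine ⟨Or.inl (by simp [tabT, hi, hA]), hvd A _ hA ?_⟩
            have hs : 0 < s := by
              rcases Nat.eq_zero_or_pos s with rfl | h0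
              · simp at hi
              · exact h0
            have hd : i.1 / s ≤ s := by
              have : i.1 / s < s + 1 := by
                rw [Nat.div_lt_iff_lt_mul hs]; nlinarith
              omega
            have hm := Nat.mod_lt i.1 hs
            simp only [T', f, Sum.elim_inl, hi, hA, if_true, if_false]
            split_ifs <;> omega
        · exact ⟨Or.inr (by simp [tabT, T', hi]), Sum.inl i, by simp [tabT, T', hi]⟩
      · refine ⟨Or.inr ?_, Sum.inr i, ?_⟩ <;>
        · simp only [Sum.elim_inr, T']
          split_ifs <;> rfl
    · intro i j hX A hA
      obtain rfl : A = 2 := hA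
      have h0 := hX 0 (by simp)
      have h1 := hX 1 (by simp)
      have e : ∀ x : Fin m ⊕ Fin s, (∃ k : ℕ, ∀ A, T' x A = f k A) ∨
          (T' x 0 = T' x 1 ∧ T' x 2 = 0) := by
        rintro (x | x)
        · by_cases hx : x.1 < s * s + s
          · exact Or.inl ⟨x.1, fun A => by simp [T', hx]⟩
          · exact Or.inr (by simp [T', hx])
        · exact Or.inr (by simp [T'])
      rcases e i with ⟨k, hk⟩ | ⟨hi, hi2⟩ <;> rcases e j with ⟨l, hl⟩ | ⟨hj, hj2⟩
      · rw [hk, hl] at h0 h1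
        have : k = l := tab_inj s k l (by simpa [f] using h0) (by simpa [f] using h1)
        rw [hk, hl, this]
      · exact absurd (by rw [← hk, ← hk, h0, h1, hj]) (hdiag k)
      · exact absurd (by rw [← hl, ← hl, ← h0, ← h1, hi]) (hdiag l)
      · rw [hi2, hj2]
  · rintro k ⟨S, T', hw, hfd⟩
    let D : Fin 3 → Finset ℕ := fun A =>
      insert 0 (Finset.univ.image (fun i : Fin k => (S i A).getD 0))
    have hD : ∀ A, (D A).card ≤ k + 1 := by
      intro A
      refine (Finset.card_insert_le _ _).trans ?_
      have := Finset.card_image_le (s := Finset.univ) (f := fun i : Fin k => (S i A).getD 0)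
      simp at this
      omega
    have hmem : ∀ x A, A ≠ 2 → T' x A ∈ D A := by
      intro x A hA
      obtain ⟨l | l, hl⟩ := (hw x A).2
      · by_cases hln : l.1 < s * s + s
        · simp [tabT, hln, hA] at hl
        · simp [tabT, hln] at hl
          simp [D, ← hl]
      · simp at hl
        refine Finset.mem_insert_of_mem (Finset.mem_image.2 ⟨l, Finset.mem_univ _, by simp [hl]⟩)
    let g : Fin (s * s + s + 1) → Fin m ⊕ Fin k := fun i => Sum.inl ⟨i.1, by omega⟩
    have hc : (Finset.univ : Finset (Fin (s * s + s + 1))).card ≤ (D 0 ×ˢ D 1).card := by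
      apply Finset.card_le_card_of_injOn (fun i => (T' (g i) 0, T' (g i) 1))
      · intro i _
        exact Finset.mem_coe.2 (Finset.mem_product.2
          ⟨hmem _ 0 (by decide), hmem _ 1 (by decide)⟩)
      · intro i _ j _ hij
        simp only [Prod.mk.injEq] at hij
        have h2 := hfd (g i) (g j) (by
          rintro A (rfl | rfl)
          · exact hij.1
          · exact hij.2) 2 rfl
        have hi := (hw (g i) 2).1
        have hj := (hw (g j) 2).1
        rw [h2] at hi
        apply Fin.ext
        simp only [g, tabT, Sum.elim_inl, if_true] at hi hj
        split_ifs at hi hj <;> simp at hi hj <;> omega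
    rw [Finset.card_product, Finset.card_univ, Fintype.card_fin] at hc
    have := Nat.mul_le_mul (hD 0) (hD 1)
    by_contra hk
    have hk' : k + 1 ≤ s := by omega
    have := Nat.mul_le_mul hk' hk'
    omega

lemma tab_diff (s m : ℕ) (h : s * s + s < m) :
    g3FD (tabT (s * s + s) m) {0, 1} {2} - g5FD (tabT (s * s + s) m) {0, 1} {2}
      = ((s * s : ℕ) : ℚ) / m := by
  unfold g3FD g5FD
  rw [tab_g3 _ _ h, tab_g5 _ _ h, Fintype.card_fin]
  push_cast
  ring

/-- There is a constant `c` such that for every rational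
`0 ≤ p/q < 1` and every `N` there is a table with more than `N` rows over a
schema with at most `c` attributes and sets `X, Y` with
`g₃(X →sp Y) − g₅(X →sp Y) = p/q`. -/
theorem stmt4 :
    ∃ c : ℕ, ∀ p q : ℕ, 0 < q → p < q → ∀ N : ℕ,
      ∃ m : ℕ, N < m ∧ ∃ r : ℕ, r ≤ c ∧ ∃ T : Fin m → Tuple (Fin r),
        ∃ X Y : Set (Fin r), g3FD T X Y - g5FD T X Y = (p : ℚ) / q := by
  refine ⟨3, fun p q hq hpq N => ?_⟩
  rcases Nat.eq_zero_or_pos p with rfl | hp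
  · have hm : N + 1 ≤ q * (N + 1) := Nat.le_mul_of_pos_left _ hq
    refine ⟨q * (N + 1), by omega, 3, le_rfl, tabT (0 * 0 + 0) _, {0, 1}, {2}, ?_⟩
    rw [tab_diff 0 _ (by simp; omega)]
    simp
  · have hm : p * (N + 2) * (p * (N + 2)) + p * (N + 2) < q * (p * (N + 2) ^ 2) := by
      have h1 : (p + 1) * (p * (N + 2) ^ 2) ≤ q * (p * (N + 2) ^ 2) :=
        Nat.mul_le_mul_right _ hpq
      have h2 : p * (N + 2) < p * (N + 2) ^ 2 := by
        apply Nat.mul_lt_mul_of_pos_left _ hp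
        nlinarith
      nlinarith
    have hN : N + 2 ≤ p * (N + 2) := Nat.le_mul_of_pos_left _ hp
    refine ⟨q * (p * (N + 2) ^ 2), by omega, 3, le_rfl,
      tabT (p * (N + 2) * (p * (N + 2)) + p * (N + 2)) _, {0, 1}, {2}, ?_⟩
    rw [tab_diff _ _ hm]
    have hp' : (p : ℚ) ≠ 0 := by positivity
    have hq' : (q : ℚ) ≠ 0 := by positivity
    have hN' : ((N : ℚ) + 2) ≠ 0 := by positivity
    push_cast
    field_simp
end

section
/- Let T = (t₁,…,tₘ) be an incomplete table over schema R, K ⊆ R, and for a tuple t let ℓ(t) be the number of K-total tuples t* ∈ ∏_{A∈K} VD(A) weakly similar to t on K. Assume the tuples are indexed so that ℓ(t₁) ≤ ℓ(t₂) ≤ … ≤ ℓ(tₘ). Let j = max{ i : ℓ(tᵢ) < i } (with j = 0 if ℓ(tᵢ) ≥ i for all i), let T_j = {t₁,…,t_j}, let T_j* be the set of K-total tuples over ∏_{A∈K} VD(A) weakly similar on K to some tuple of T_j, and let G* be the subgraph of the K-extension bipartite graph G of T induced on T_j ∪ T_j*. Then ν(G) = ν(G*) + (m − j), where ν denotes maximum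 matching size. -/
theorem matching_card_le {R : Type} {m : ℕ} {T : Fin m → Tuple R} {K : Set R}
    {M : Finset (Fin m × (↥K → ℕ))} (h : IsExtMatching T K M) (S : Finset (Fin m))
    (hS : ∀ e ∈ M, e.1 ∈ S) : M.card ≤ S.card :=
  Finset.card_le_card_of_injOn Prod.fst hS (fun e he e' he' hh => h.2.1 e he e' he' hh)

theorem matching_extend {R : Type} {m : ℕ} (T : Fin m → Tuple R) (K : Set R) (j : ℕ)
    (hmax : ∀ i : Fin m, j < i.1 + 1 → i.1 + 1 ≤ ellK T K (T i))
    (M : Finset (Fin m × (↥K → ℕ))) (hM : IsExtMatching T K M) (hMj : ∀ e ∈ M, e.1.1 < j)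
    (d : ℕ) : j + d ≤ m → ∃ M' : Finset (Fin m × (↥K → ℕ)), IsExtMatching T K M' ∧
      (∀ e ∈ M', e.1.1 < j + d) ∧ M'.card = M.card + d := by
  classical
  induction d with
  | zero => intro _; exact ⟨M, hM, hMj, rfl⟩
  | succ d ih =>
    intro hd
    obtain ⟨N, hN, hNj, hc⟩ := ih (by omega)
    let k : Fin m := ⟨j + d, by omega⟩
    have hcard : N.card ≤ j + d := by
      have := matching_card_le hN (Finset.Iio k) (fun e he => by
        simpa [k, Fin.lt_def] using hNj e he)
      simpa [k] using this
    have hk := hmax k (by simp [k])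
    have hk' : (↑(N.image Prod.snd) : Set (↥K → ℕ)).ncard <
        Set.ncard {f : ↥K → ℕ | (∀ A : ↥K, f A ∈ VD T A.1) ∧ adjExt K (T k) f} := by
      rw [Set.ncard_coe_finset]
      have h1 : (N.image Prod.snd).card ≤ N.card := Finset.card_image_le
      have h2 : j + d + 1 ≤ ellK T K (T k) := hk
      unfold ellK at h2
      omega
    obtain ⟨f, ⟨hf1, hf2⟩, hfn⟩ := Set.exists_mem_notMem_of_ncard_lt_ncard hk'
    have hfn' : ∀ e ∈ N, e.2 ≠ f := fun e he h =>
      hfn (by simpa using ⟨e.1, by rw [← h]; exact he⟩)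
    have hkn : ∀ e ∈ N, e.1 ≠ k := fun e he h => by
      have := hNj e he
      rw [h] at this
      simp [k] at this
    refine ⟨insert (k, f) N, ⟨?_, ?_, ?_⟩, ?_, ?_⟩
    · intro e he
      rcases Finset.mem_insert.1 he with rfl | he
      · exact ⟨⟨hf1, k, hf2⟩, hf2⟩
      · exact hN.1 e he
    · intro e he e' he' h
      rcases Finset.mem_insert.1 he with rfl | he <;>
        rcases Finset.mem_insert.1 he' with rfl | he'
      · rfl
      · exact absurd h.symm (hkn e' he')
      · exact absurd h (hkn e he)
      · exact hN.2.1 e he e' he' h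
    · intro e he e' he' h
      rcases Finset.mem_insert.1 he with rfl | he <;>
        rcases Finset.mem_insert.1 he' with rfl | he'
      · rfl
      · exact absurd h.symm (hfn' e' he')
      · exact absurd h (hfn' e he)
      · exact hN.2.2 e he e' he' h
    · intro e he
      rcases Finset.mem_insert.1 he with rfl | he
      · simp [k]
      · have := hNj e he
        omega
    · rw [Finset.card_insert_of_notMem (fun h => hkn _ h rfl), hc]
      omega

/-- With tuples sorted by `ℓ` and `j = max{ i : ℓ(tᵢ) < i }`
(1-based; `j = 0` if no such `i`), `ν(G) = ν(G*) + (m − j)`. -/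
theorem stmt7 {R : Type} [Fintype R] {m : ℕ} (T : Fin m → Tuple R) (K : Set R) (j : ℕ)
    (hsort : ∀ i i' : Fin m, i ≤ i' → ellK T K (T i) ≤ ellK T K (T i'))
    (hjm : j ≤ m)
    (hmax : ∀ i : Fin m, j < i.1 + 1 → i.1 + 1 ≤ ellK T K (T i))
    (hmem : ∀ hj : 0 < j, ellK T K (T ⟨j - 1, by omega⟩) < j) :
    nuExt T K = nuExtStar T K j + (m - j) := by
  classical
  have bd : ∀ M : Finset (Fin m × (↥K → ℕ)), IsExtMatching T K M → M.card ≤ m := fun M hM => by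
    simpa using matching_card_le hM Finset.univ (fun _ _ => Finset.mem_univ _)
  have emp : IsExtMatching T K ∅ := by simp [IsExtMatching]
  apply le_antisymm
  · refine csSup_le (Set.nonempty_of_mem (x := 0) ⟨∅, emp, rfl⟩) ?_
    rintro n ⟨M, hM, rfl⟩
    have hsub : ∀ N : Finset (Fin m × (↥K → ℕ)), N ⊆ M → IsExtMatching T K N := fun N h =>
      ⟨fun e he => hM.1 e (h he),
        fun e he e' he' => hM.2.1 e (h he) e' (h he'),
        fun e he e' he' => hM.2.2 e (h he) e' (h he')⟩
    rw [← Finset.card_filter_add_card_filter_not (s := M) (fun e => e.1.1 < j)]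
    apply add_le_add
    · apply le_csSup
      · exact ⟨m, by rintro n ⟨N, hN, _, rfl⟩; exact bd N hN⟩
      · refine ⟨_, hsub _ (Finset.filter_subset _ _), ?_, rfl⟩
        intro e he
        obtain ⟨he, hj⟩ := Finset.mem_filter.1 he
        exact ⟨hj, (hM.1 e he).1.1, e.1, hj, (hM.1 e he).2⟩
    · have h1 : (Finset.univ.filter (fun i : Fin m => ¬ i.1 < j)).card ≤ (Finset.Ico j m).card :=
        Finset.card_le_card_of_injOn Fin.val (fun i hi => by
          have := (Finset.mem_filter.1 hi).2
          simp; omega) (fun a _ b _ h => Fin.ext h)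
      rw [Nat.card_Ico] at h1
      exact (matching_card_le (hsub _ (Finset.filter_subset _ _)) _ (fun e he => Finset.mem_filter.2
        ⟨Finset.mem_univ _, (Finset.mem_filter.1 he).2⟩)).trans h1
  · have hmemS : nuExtStar T K j ∈ {n : ℕ | ∃ M : Finset (Fin m × (↥K → ℕ)),
        IsExtMatching T K M ∧ (∀ e ∈ M, e.1.1 < j ∧ e.2 ∈ TjStar T K j) ∧ M.card = n} := by
      apply Nat.sSup_mem
      · exact ⟨0, ∅, emp, by simp, rfl⟩
      · exact ⟨m, by rintro n ⟨N, hN, _, rfl⟩; exact bd N hN⟩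
    obtain ⟨M, hM, hMj, hc⟩ := hmemS
    obtain ⟨N, hN, _, hNc⟩ := matching_extend T K j hmax M hM (fun e he => (hMj e he).1)
      (m - j) (by omega)
    apply le_csSup
    · exact ⟨m, by rintro n ⟨N, hN, rfl⟩; exact bd N hN⟩
    · exact ⟨N, hN, by rw [hNc, hc]⟩
end

section
/- There exists an incomplete table T over a schema R and a family 𝒦 of subsets of R such that g₃(𝒦) > max{ g₃(K) : K ∈ 𝒦 }. In particular, for R = {A₁,A₂,A₃}, the four-tuple table T with rows t₁ = (1, ⊥, 1), t₂ = (1, 2, 2), t₃ = (2, 1, 1), t₄ = (2, 1, 1), and 𝒦 = {{A₁,A₂}, {A₂,A₃}}, satisfies g₃({A₁,A₂}) = g₃({A₂,A₃}) = 1/4 while g₃(𝒦) > 1/4. -/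
/-- The concrete table. -/
def exT : Fin 4 → Tuple (Fin 3) :=
  ![![some 1, none, some 1], ![some 1, some 2, some 2],
    ![some 2, some 1, some 1], ![some 2, some 1, some 1]]

/-- The world with the missing value replaced by `a`. -/
def exW (a : ℕ) : Fin 4 → Fin 3 → ℕ :=
  ![![1, a, 1], ![1, 2, 2], ![2, 1, 1], ![2, 1, 1]]

theorem ex_tot {S : Finset (Fin 4)} {T' : {i : Fin 4 // i ∉ S} → Fin 3 → ℕ}
    (h : IsSpWorld (fun i : {i : Fin 4 // i ∉ S} => exT i.1) T')
    (i : Fin 4) (hi : i ∉ S) (A : Fin 3) (v : ℕ) (hv : exT i A = some v) :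
    T' ⟨i, hi⟩ A = v := by
  have := (h ⟨i, hi⟩ A).1
  simp only [hv] at this
  have h2 : v = T' ⟨i, hi⟩ A := by simpa using this
  exact h2.symm

theorem ex_23 {S : Finset (Fin 4)} {K : Set (Fin 3)}
    (h : spKey (fun i : {i : Fin 4 // i ∉ S} => exT i.1) K) : (2 : Fin 4) ∈ S ∨ (3 : Fin 4) ∈ S := by
  by_contra hc
  push Not at hc
  obtain ⟨T', hw, hk⟩ := h
  have := hk ⟨2, hc.1⟩ ⟨3, hc.2⟩ (by
    intro A _
    have e : exT 2 A = some (![2, 1, 1] A) := by fin_cases A <;> rfl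
    rw [ex_tot hw 2 hc.1 A _ e, ex_tot hw 3 hc.2 A _ e])
  simp at this

theorem ex_world (a : ℕ) (ha : a = 1 ∨ a = 2) :
    IsSpWorld (fun i : {i : Fin 4 // i ∉ ({3} : Finset (Fin 4))} => exT i.1) (fun i => exW a i.1) := by
  have h1 : (1 : Fin 4) ∉ ({3} : Finset (Fin 4)) := by decide
  have h2 : (2 : Fin 4) ∉ ({3} : Finset (Fin 4)) := by decide
  rintro ⟨i, hi⟩ A
  by_cases h : i = 0 ∧ A = 1
  · obtain ⟨rfl, rfl⟩ := h
    refine ⟨Or.inl rfl, ?_⟩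
    rcases ha with rfl | rfl
    · exact ⟨⟨2, h2⟩, rfl⟩
    · exact ⟨⟨1, h1⟩, rfl⟩
  · have e : exT i A = some (exW a i A) := by
      fin_cases i <;> fin_cases A <;> first | rfl | (exact absurd ⟨rfl, rfl⟩ h)
    exact ⟨Or.inr e, ⟨⟨i, hi⟩, e⟩⟩

theorem ex_num {K : Set (Fin 3)}
    (h : spKey (fun i : {i : Fin 4 // i ∉ ({3} : Finset (Fin 4))} => exT i.1) K) :
    g3Key exT K = 1/4 := by
  have : g3KeyNum exT K = 1 := by
    apply le_antisymm
    · exact Nat.sInf_le ⟨{3}, rfl, h⟩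
    · refine le_csInf ⟨1, {3}, rfl, h⟩ ?_
      rintro k ⟨S, rfl, hS⟩
      rcases ex_23 hS with h | h <;> exact Finset.card_pos.2 ⟨_, h⟩
  simp [g3Key, this]

theorem ex_K1 : g3Key exT {0, 1} = 1/4 := by
  refine ex_num ⟨_, ex_world 1 (Or.inl rfl), ?_⟩
  rintro ⟨i, hi⟩ ⟨j, hj⟩ h
  have a := h 0 (by simp)
  have b := h 1 (by simp)
  clear h
  have hi' : i ≠ 3 := by simpa using hi
  have hj' : j ≠ 3 := by simpa using hj
  fin_cases i <;> fin_cases j <;> simp_all [exW]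

theorem ex_K2 : g3Key exT {1, 2} = 1/4 := by
  refine ex_num ⟨_, ex_world 2 (Or.inr rfl), ?_⟩
  rintro ⟨i, hi⟩ ⟨j, hj⟩ h
  have a := h 1 (by simp)
  have b := h 2 (by simp)
  clear h
  have hi' : i ≠ 3 := by simpa using hi
  have hj' : j ≠ 3 := by simpa using hj
  fin_cases i <;> fin_cases j <;> simp_all [exW]

theorem ex_coll {S : Finset (Fin 4)} (r : Fin 4) (hr : exT r = ![some 2, some 1, some 1])
    (hr0 : r ≠ 0) (h0 : (0 : Fin 4) ∉ S) (h1 : (1 : Fin 4) ∉ S) (h2 : r ∉ S) :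
    ¬ spKeySystem (fun i : {i : Fin 4 // i ∉ S} => exT i.1) {{0, 1}, {1, 2}} := by
  rintro ⟨T', hw, hk⟩
  have hv : T' ⟨0, h0⟩ 1 = 1 ∨ T' ⟨0, h0⟩ 1 = 2 := by
    obtain ⟨⟨i, hi⟩, e⟩ := (hw ⟨0, h0⟩ 1).2
    fin_cases i <;> simp [exT] at e <;> omega
  have a0 := ex_tot hw 0 h0 0 1 rfl
  have a2 := ex_tot hw 0 h0 2 1 rfl
  have b0 := ex_tot hw 1 h1 0 1 rfl
  have b1 := ex_tot hw 1 h1 1 2 rfl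
  have c1 := ex_tot hw r h2 1 1 (by rw [hr]; rfl)
  have c2 := ex_tot hw r h2 2 1 (by rw [hr]; rfl)
  rcases hv with hv | hv
  · have := hk {1, 2} (by simp) ⟨0, h0⟩ ⟨r, h2⟩ (by
      rintro A (rfl | rfl)
      · rw [hv, c1]
      · rw [a2, c2])
    exact hr0 (congrArg Subtype.val this).symm
  · have := hk {0, 1} (by simp) ⟨0, h0⟩ ⟨1, h1⟩ (by
      rintro A (rfl | rfl)
      · rw [a0, b0]
      · rw [hv, b1])
    simp at this

theorem ex_sys : (1/4 : ℚ) < g3Sys exT {{0, 1}, {1, 2}} := by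
  have : 2 ≤ g3SysNum exT {{0, 1}, {1, 2}} := by
    refine le_csInf ⟨_, Finset.univ, rfl, fun i => absurd (Finset.mem_univ _) i.2,
      fun i => absurd (Finset.mem_univ _) i.2,
      fun _ _ i => absurd (Finset.mem_univ _) i.2⟩ ?_
    rintro k ⟨S, rfl, hS⟩
    by_contra hc
    have hle : S.card ≤ 1 := by omega
    rw [Finset.card_le_one] at hle
    have hk : spKey (fun i : {i : Fin 4 // i ∉ S} => exT i.1) {0, 1} := by
      obtain ⟨T', hw, hk⟩ := hS
      exact ⟨T', hw, hk _ (by simp)⟩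
    rcases ex_23 hk with h | h
    · refine ex_coll 3 rfl (by decide) ?_ ?_ ?_ hS <;>
        exact fun h' => absurd (hle _ h' _ h) (by decide)
    · refine ex_coll 2 rfl (by decide) ?_ ?_ ?_ hS <;>
        exact fun h' => absurd (hle _ h' _ h) (by decide)
  have h2 : (2 : ℚ) ≤ g3SysNum exT {{0, 1}, {1, 2}} := by exact_mod_cast this
  simp only [g3Sys, Fintype.card_fin]
  push_cast
  linarith

/-- There is a table and a key family with
`g₃(𝒦) > max{ g₃(K) : K ∈ 𝒦 }`; in particular the concrete four-row table over
`{A₁,A₂,A₃}` with `𝒦 = {{A₁,A₂},{A₂,A₃}}` has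
`g₃({A₁,A₂}) = g₃({A₂,A₃}) = 1/4 < g₃(𝒦)`. -/
theorem stmt12 :
    ∃ (Rt ιt : Type) (_ : Fintype Rt) (_ : Fintype ιt) (T : ιt → Tuple Rt)
      (𝒦 : Set (Set Rt)), 𝒦.Finite ∧
        (∀ K ∈ 𝒦, g3Key T K < g3Sys T 𝒦) ∧
    (let T : Fin 4 → Tuple (Fin 3) :=
      ![![some 1, none, some 1], ![some 1, some 2, some 2],
        ![some 2, some 1, some 1], ![some 2, some 1, some 1]]
     let K1 : Set (Fin 3) := {0, 1}
     let K2 : Set (Fin 3) := {1, 2}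
     g3Key T K1 = 1/4 ∧ g3Key T K2 = 1/4 ∧ (1/4 : ℚ) < g3Sys T {K1, K2}) := by
  refine ⟨Fin 3, Fin 4, inferInstance, inferInstance, exT, {{0, 1}, {1, 2}}, by simp, ?_,
    ex_K1, ex_K2, ex_sys⟩
  rintro K (rfl | rfl)
  · rw [ex_K1]; exact ex_sys
  · rw [ex_K2]; exact ex_sys
end
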